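/- arXiv:math/0612673 — 2 statements merged into one kernel-verified Lean document; each statement's English description precedes it below -/
import Mathlib

section
/- (Key lemma for standard metrics.) Let 𝕂 ∈ {ℝ,ℂ}, F a 𝕂-vector space, (wₙ)_{n≥1} a monotonically decreasing sequence of positive real numbers with wₙ → 0, and (pₙ)_{n≥1} a sequence of seminorms on F. Define ‖x‖ := sup_{n≥1} wₙ·pₙ(x)/(1+pₙ(x)) for x ∈ F (a finite supremum, since each term is at most w₁). Let x, y ∈ F be such that pₖ(x) > 0 for some k and pₖ(y) > 0 for some k, and let n be the minimal index with pₙ(x) > 0 and m the minimal index with pₘ(y) > 0. Then ‖t·x‖ > 0 for every t ∈ 𝕂 with t ≠ 0, and sup_{t ∈ 𝕂, t ≠ 0} ‖t·y‖ / ‖t·x‖ ≥ wₘ/wₙ. -/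
open Filter Topology

/-- Key lemma for standard metrics.
Let `F` be a `𝕜`-vector space, `(wₙ)` a decreasing sequence of positive reals tending
to `0`, and `(pₙ)` seminorms on `F`.  Define `‖x‖ := ⨆ n, wₙ·pₙ(x)/(1+pₙ(x))`.
If `n` is the minimal index with `pₙ(x) > 0` and `m` the minimal index with
`pₘ(y) > 0`, then `‖t•x‖ > 0` for all `t ≠ 0`, and
`sup_{t ≠ 0} ‖t•y‖/‖t•x‖ ≥ wₘ/wₙ` (every upper bound of the ratios is `≥ wₘ/wₙ`). -/
theorem stmt11
    {𝕜 : Type*} [RCLike 𝕜] {F : Type*} [AddCommGroup F] [Module 𝕜 F]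
    (w : ℕ → ℝ) (hw_pos : ∀ n, 0 < w n) (hw_anti : Antitone w)
    (hw_lim : Tendsto w atTop (𝓝 0))
    (p : ℕ → Seminorm 𝕜 F)
    (x y : F) (n m : ℕ)
    (hn : 0 < p n x) (hn' : ∀ k < n, p k x = 0)
    (hm : 0 < p m y) (hm' : ∀ k < m, p k y = 0) :
    (∀ t : 𝕜, t ≠ 0 → 0 < ⨆ k : ℕ, w k * (p k (t • x) / (1 + p k (t • x)))) ∧
    ∀ c : ℝ,
      (∀ t : 𝕜, t ≠ 0 →
        (⨆ k : ℕ, w k * (p k (t • y) / (1 + p k (t • y)))) /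
          (⨆ k : ℕ, w k * (p k (t • x) / (1 + p k (t • x)))) ≤ c) →
      w m / w n ≤ c := by
  have hfrac : ∀ a : ℝ, 0 ≤ a → a / (1 + a) ≤ 1 := fun a ha => by
    rw [div_le_one (by linarith)]; linarith
  have hbdd : ∀ z : F, BddAbove (Set.range fun k : ℕ => w k * (p k z / (1 + p k z))) := by
    intro z
    refine ⟨w 0, ?_⟩
    rintro _ ⟨k, rfl⟩
    have h1 := hfrac (p k z) (apply_nonneg _ _)
    have h2 := hw_anti (Nat.zero_le k)
    have h3 := mul_le_mul_of_nonneg_left h1 (hw_pos k).le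
    show w k * (p k z / (1 + p k z)) ≤ w 0
    linarith
  have hlow : ∀ (z : F) (k : ℕ), w k * (p k z / (1 + p k z)) ≤
      ⨆ k : ℕ, w k * (p k z / (1 + p k z)) := fun z k => le_ciSup (hbdd z) k
  have hpos : ∀ t : 𝕜, t ≠ 0 → 0 < ⨆ k : ℕ, w k * (p k (t • x) / (1 + p k (t • x))) := by
    intro t ht
    refine lt_of_lt_of_le ?_ (hlow (t • x) n)
    have h0 : 0 < p n (t • x) := by
      rw [map_smul_eq_mul]
      exact mul_pos (norm_pos_iff.mpr ht) hn
    have := hw_pos n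
    positivity
  refine ⟨hpos, ?_⟩
  intro c hc
  have hup : ∀ t : 𝕜, (⨆ k : ℕ, w k * (p k (t • x) / (1 + p k (t • x)))) ≤ w n := by
    intro t
    refine ciSup_le fun k => ?_
    rcases lt_or_ge k n with hk | hk
    · rw [map_smul_eq_mul, hn' k hk]
      simpa using (hw_pos n).le
    · have h1 := hfrac (p k (t • x)) (apply_nonneg _ _)
      have h2 := hw_anti hk
      have h3 := mul_le_mul_of_nonneg_left h1 (hw_pos k).le
      linarith
  have hc0 : 0 ≤ c := by
    refine le_trans (div_nonneg ?_ (hpos 1 one_ne_zero).le) (hc 1 one_ne_zero)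
    refine le_trans ?_ (hlow _ m)
    have := hw_pos m
    have := apply_nonneg (p m) ((1 : 𝕜) • y)
    positivity
  rw [div_le_iff₀ (hw_pos n)]
  by_contra hlt
  push Not at hlt
  obtain ⟨j, hj⟩ := exists_nat_gt (c * w n / ((w m - c * w n) * p m y))
  have hd : 0 < (w m - c * w n) * p m y := mul_pos (by linarith) hm
  rw [div_lt_iff₀ hd] at hj
  have hj0 : (0 : ℝ) < j := by
    have h0 : 0 ≤ c * w n := mul_nonneg hc0 (hw_pos n).le
    by_contra hcon
    have := mul_nonpos_of_nonpos_of_nonneg (not_lt.mp hcon) hd.le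
    linarith
  have ht : (j : 𝕜) ≠ 0 := by
    have : j ≠ 0 := by rintro rfl; simp at hj0
    exact_mod_cast this
  have h1 := hc j ht
  rw [div_le_iff₀ (hpos _ ht)] at h1
  have h2 := mul_le_mul_of_nonneg_left (hup (j : 𝕜)) hc0
  have h3 := (hlow ((j : 𝕜) • y) m).trans (h1.trans h2)
  rw [map_smul_eq_mul, RCLike.norm_natCast, ← mul_div_assoc,
    div_le_iff₀ (by positivity)] at h3
  nlinarith
end

section
/- (Linear contractions of ℝ^ℕ shift the canonical filtration.) Fix a ∈ (0,1) and equip the space ℝ^ℕ of real sequences x = (x₁, x₂, …) with ‖x‖_d := sup_{n≥1} aⁿ·|xₙ|/(1+|xₙ|) and the translation-invariant metric d(x,y) := ‖x−y‖_d. For n ≥ 1 let Fₙ := { x ∈ ℝ^ℕ : xₘ = 0 for all m < n }. Let A : ℝ^ℕ → ℝ^ℕ be a linear map with ‖A‖_{d,d} := sup_{x ≠ 0} ‖A x‖_d / ‖x‖_d < ∞. If ‖A‖_{d,d} < 1, then A(Fₖ) ⊆ F_{k+1} for every k ≥ 1; more generally, for any integer ℓ ≥ 1 with ‖A‖_{d,d}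 < a^{ℓ−1}, one has A(Fₖ) ⊆ F_{k+ℓ} for every k ≥ 1. -/
open Set

theorem aux_shift
    (a : ℝ) (ha0 : 0 < a) (ha1 : a < 1)
    (A : (ℕ → ℝ) →ₗ[ℝ] (ℕ → ℝ)) (C : ℝ)
    (hC : ∀ x : ℕ → ℝ,
      (⨆ n : ℕ, a ^ (n + 1) * (|A x n| / (1 + |A x n|))) ≤
        C * ⨆ n : ℕ, a ^ (n + 1) * (|x n| / (1 + |x n|)))
    (m : ℕ) (hm : C < a ^ m) (k : ℕ) (x : ℕ → ℝ) (hx : ∀ i < k, x i = 0)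
    (i : ℕ) (hi : i < k + (m + 1)) : A x i = 0 := by
  by_contra hne
  have hy : 0 < |A x i| := abs_pos.mpr hne
  have frac : ∀ r : ℝ, |r| / (1 + |r|) ≤ 1 := fun r => by
    have := abs_nonneg r
    rw [div_le_one (by linarith)]
    linarith
  have frac0 : ∀ r : ℝ, 0 ≤ |r| / (1 + |r|) := fun r => by positivity
  have bdd : ∀ z : ℕ → ℝ, BddAbove (range fun n : ℕ => a ^ (n + 1) * (|z n| / (1 + |z n|))) := by
    intro z
    refine ⟨1, ?_⟩
    rintro _ ⟨n, rfl⟩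
    exact mul_le_one₀ (pow_le_one₀ ha0.le ha1.le) (frac0 _) (frac _)
  set D := max C 0 with hD
  have hD0 : 0 ≤ D := le_max_right _ _
  have hDm : D < a ^ m := max_lt hm (pow_pos ha0 m)
  have hgap : 0 < a ^ m - D := sub_pos.mpr hDm
  set s := (D + 1) / (a ^ m - D) with hs
  have hs0 : 0 < s := by positivity
  set t := s / |A x i| with ht
  have ht0 : 0 < t := by positivity
  have h1 := hC (t • x)
  have habs : |A (t • x) i| = s := by
    rw [map_smul, Pi.smul_apply, smul_eq_mul, abs_mul, abs_of_pos ht0, ht]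
    field_simp
  have h2 := le_ciSup (bdd (A (t • x))) i
  simp only [habs] at h2
  have h3 : (⨆ n : ℕ, a ^ (n + 1) * (|(t • x) n| / (1 + |(t • x) n|))) ≤ a ^ (k + 1) := by
    apply ciSup_le
    intro n
    by_cases hn : n < k
    · simp [hx n hn]
      positivity
    · calc _ ≤ a ^ (n + 1) * 1 := by
            apply mul_le_mul_of_nonneg_left (frac _) (by positivity)
        _ ≤ a ^ (k + 1) := by
            rw [mul_one]
            exact pow_le_pow_of_le_one ha0.le ha1.le (by omega)
  have h4 : 0 ≤ (⨆ n : ℕ, a ^ (n + 1) * (|(t • x) n| / (1 + |(t • x) n|))) :=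
    Real.iSup_nonneg fun n => mul_nonneg (by positivity) (frac0 _)
  have h5 := mul_le_mul_of_nonneg_right (le_max_left C 0) h4
  have h6 := mul_le_mul_of_nonneg_left h3 hD0
  have h7 : a ^ (k + 1) * a ^ m ≤ a ^ (i + 1) := by
    rw [← pow_add]
    exact pow_le_pow_of_le_one ha0.le ha1.le (by omega)
  have h8 : a ^ (k + 1) * a ^ m * (s / (1 + s)) ≤ D * a ^ (k + 1) :=
    (mul_le_mul_of_nonneg_right h7 (by positivity)).trans
      (h2.trans (h1.trans (h5.trans h6)))
  have h9 : a ^ m * (s / (1 + s)) ≤ D := by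
    have hp : 0 < a ^ (k + 1) := by positivity
    refine le_of_mul_le_mul_left ?_ hp
    linarith
  rw [← mul_div_assoc, div_le_iff₀ (by linarith)] at h9
  have h10 : s * (a ^ m - D) = D + 1 := by
    rw [hs]
    field_simp
  linarith

/-- Linear contractions of `ℝ^ℕ` shift the canonical filtration.
Equip `ℝ^ℕ` (sequences indexed from `0`, representing `(x₁,x₂,…)`) with
`‖x‖_d := ⨆ n, a^(n+1)·|xₙ|/(1+|xₙ|)` for a fixed `a ∈ (0,1)`.  Let
`Fset k := {x : ∀ i < k, xᵢ = 0}` (so `Fset (n-1)` is the paper's `Fₙ`).  If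
`A` is linear with all `‖A x‖_d ≤ C·‖x‖_d` and `C < 1`, then `A` maps `Fset k`
into `Fset (k+1)` for every `k`; more generally if `ℓ ≥ 1` and `C < a^(ℓ-1)`,
then `A` maps `Fset k` into `Fset (k+ℓ)` for every `k`. -/
theorem stmt12
    (a : ℝ) (ha0 : 0 < a) (ha1 : a < 1)
    (A : (ℕ → ℝ) →ₗ[ℝ] (ℕ → ℝ)) (C : ℝ)
    (hC : ∀ x : ℕ → ℝ,
      (⨆ n : ℕ, a ^ (n + 1) * (|A x n| / (1 + |A x n|))) ≤
        C * ⨆ n : ℕ, a ^ (n + 1) * (|x n| / (1 + |x n|))) :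
    (C < 1 → ∀ k : ℕ, ∀ x : ℕ → ℝ, (∀ i < k, x i = 0) → ∀ i < k + 1, A x i = 0) ∧
    (∀ l : ℕ, 1 ≤ l → C < a ^ (l - 1) →
      ∀ k : ℕ, ∀ x : ℕ → ℝ, (∀ i < k, x i = 0) → ∀ i < k + l, A x i = 0) := by
  constructor
  · intro h k x hx i hi
    exact aux_shift a ha0 ha1 A C hC 0 (by simpa using h) k x hx i (by omega)
  · intro l hl h k x hx i hi
    exact aux_shift a ha0 ha1 A C hC (l - 1) h k x hx i (by omega)
end
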